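/- Let v(n) be a sequence tending to +∞ and for each n let E_n be a Borel subset of ℝ^n with liminf_{n→∞} ν_α^n(E_n) > 0 (respectively liminf_{n→∞} μ_α^n(E_n) > 0). (i) For α ∈ (0,2] and any sequence h_n ∈ ℝ^n, liminf_{n→∞} (1/v(n)) log ν_α^n( E_n + v(n)^{1/α} h_n ) ≥ − limsup_{n→∞} ‖h_n‖_{ℓ^α}^α. (ii) For α ∈ (0,1] and any sequence h_n ∈ ℝ₊^n, liminf_{n→∞} (1/v(n)) log μ_α^n( E_n + v(n)^{1/α} h_n ) ≥ − limsup_{n→∞} ‖h_n‖_{ℓ^α}^α. -/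

import Mathlib

open MeasureTheory Filter Topology Pointwise

noncomputable section

/-- The (unnormalized) measure on `ℝ` with density `exp (-|x|^α)`. -/
def nuKernel (α : ℝ) : Measure ℝ :=
  volume.withDensity fun x => ENNReal.ofReal (Real.exp (-|x| ^ α))

/-- The probability measure `ν_α` on `ℝ`. -/
def nuAlpha (α : ℝ) : Measure ℝ := (nuKernel α Set.univ)⁻¹ • nuKernel α

/-- The `n`-fold product measure `ν_α^n` on `ℝ^n`. -/
def nuPi (α : ℝ) (n : ℕ) : Measure (Fin n → ℝ) := Measure.pi fun _ => nuAlpha α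

/-- The (unnormalized) measure on `ℝ` with density `exp (-x^α) 1_{x ≥ 0}`. -/
def muKernel (α : ℝ) : Measure ℝ :=
  volume.withDensity fun x => if 0 ≤ x then ENNReal.ofReal (Real.exp (-x ^ α)) else 0

/-- The probability measure `μ_α` on `ℝ`. -/
def muAlpha (α : ℝ) : Measure ℝ := (muKernel α Set.univ)⁻¹ • muKernel α

/-- The `n`-fold product measure `μ_α^n` on `ℝ^n`. -/
def muPi (α : ℝ) (n : ℕ) : Measure (Fin n → ℝ) := Measure.pi fun _ => muAlpha α

/-- `‖h‖_{ℓ^α}^α = ∑ |h i|^α`. -/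
def lpNormPow (p : ℝ) {n : ℕ} (h : Fin n → ℝ) : ℝ := ∑ i, |h i| ^ p

/-- `log : ℝ≥0∞ → EReal`, with `log 0 = ⊥` and `log ⊤ = ⊤`. -/
def elog (x : ENNReal) : EReal :=
  if x = 0 then ⊥ else if x = ⊤ then ⊤ else ((Real.log x.toReal : ℝ) : EReal)

/-!
Translating by `h` multiplies the density of `ν_α^n` by `exp (‖x‖_α^α - ‖x + h‖_α^α)`. For `α ≤ 2`
the part of `|x + h| ^ α` that is even in `h` is at most `|x| ^ α + |h| ^ α`, so the translation
costs at most `‖h‖_α^α` plus the sum of the odd parts. Under `ν_α^n` the odd parts are independent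
and centred, with total variance at most `4 * ‖h‖_α^α * ∫ |x| ^ α ∂ν_α`; when `‖h‖_α^α` is of order
`v`, Chebyshev bounds their sum by `ε * v` off a set of probability `O (1 / v)`, which cannot
exhaust an event of probability bounded below. For `μ_α^n` with `α ≤ 1` and `h ≥ 0`, subadditivity
of `x ↦ x ^ α` gives `‖x + h‖_α^α ≤ ‖x‖_α^α + ‖h‖_α^α`, and there is no fluctuation to control.
-/

open ProbabilityTheory
open scoped ENNReal

section ProductDensity

variable {ι : Type*} [Fintype ι]

lemma lintegral_fin_pi_prod {n : ℕ} {X : Fin n → Type*} [∀ i, MeasurableSpace (X i)]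
    (μ : ∀ i, Measure (X i)) [∀ i, SigmaFinite (μ i)] {f : ∀ i, X i → ℝ≥0∞}
    (hf : ∀ i, Measurable (f i)) :
    ∫⁻ x, ∏ i, f i (x i) ∂Measure.pi μ = ∏ i, ∫⁻ x, f i x ∂μ i := by
  induction n with
  | zero => simp
  | succ n ih =>
    have hrest : Measurable fun x : (j : Fin n) → X j.succ => ∏ j, f j.succ (x j) :=
      Finset.measurable_prod _ fun j _ => (hf j.succ).comp (measurable_pi_apply j)
    calc ∫⁻ x, ∏ i, f i (x i) ∂Measure.pi μ
        = ∫⁻ z : X 0 × ((j : Fin n) → X j.succ), f 0 z.1 * ∏ j, f j.succ (z.2 j)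
            ∂(μ 0).prod (Measure.pi fun j => μ j.succ) := by
          simp only [Fin.prod_univ_succ]
          exact (measurePreserving_piFinSuccAbove μ 0).symm.lintegral_map_equiv _ _
      _ = (∫⁻ x, f 0 x ∂μ 0) * ∏ j, ∫⁻ x, f j.succ x ∂μ (Fin.succ j) := by
          rw [lintegral_prod_mul (hf 0).aemeasurable hrest.aemeasurable, ih _ fun j => hf j.succ]
      _ = ∏ i, ∫⁻ x, f i x ∂μ i := (Fin.prod_univ_succ fun i => ∫⁻ x, f i x ∂μ i).symm

lemma lintegral_pi_prod {X : ι → Type*} [∀ i, MeasurableSpace (X i)]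
    (μ : ∀ i, Measure (X i)) [∀ i, SigmaFinite (μ i)] {f : ∀ i, X i → ℝ≥0∞}
    (hf : ∀ i, Measurable (f i)) :
    ∫⁻ x, ∏ i, f i (x i) ∂Measure.pi μ = ∏ i, ∫⁻ x, f i x ∂μ i := by
  let e := (Fintype.equivFin ι).symm
  rw [(measurePreserving_piCongrLeft μ e).lintegral_map_equiv]
  simp only [← e.prod_comp, MeasurableEquiv.coe_piCongrLeft, Equiv.piCongrLeft_apply_apply]
  exact lintegral_fin_pi_prod _ fun i => hf (e i)

lemma pi_withDensity {X : ι → Type*} [∀ i, MeasurableSpace (X i)]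
    (μ : ∀ i, Measure (X i)) [∀ i, SigmaFinite (μ i)] {f : ∀ i, X i → ℝ≥0∞}
    (hf : ∀ i, Measurable (f i)) [∀ i, SigmaFinite ((μ i).withDensity (f i))] :
    Measure.pi (fun i => (μ i).withDensity (f i)) =
      (Measure.pi μ).withDensity fun x => ∏ i, f i (x i) := by
  refine Measure.pi_eq fun s hs => ?_
  rw [withDensity_apply _ (MeasurableSet.univ_pi hs), Measure.restrict_pi_pi,
    lintegral_pi_prod _ hf]
  exact Finset.prod_congr rfl fun i _ => (withDensity_apply _ (hs i)).symm

end ProductDensity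

section TranslatedDensity

variable {G : Type*} [AddGroup G] [MeasurableSpace G] [MeasurableAdd G]
  (μ : Measure G) [μ.IsAddRightInvariant] {f : G → ℝ≥0∞} {c : ℝ≥0∞}

lemma mul_withDensity_inter_le_image_add_right {h : G} {A : Set G} (hA : MeasurableSet A)
    (hle : ∀ x ∈ A, c * f x ≤ f (x + h)) (E : Set G) :
    c * μ.withDensity f (E ∩ A) ≤ μ.withDensity f ((fun x => x + h) '' E) := by
  set T := toMeasurable (μ.withDensity f) ((fun x => x + h) '' E)
  have hT : MeasurableSet T := measurableSet_toMeasurable _ _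
  have hP : MeasurableSet ((fun x => x + h) ⁻¹' T) := measurable_add_const h hT
  have hEP : E ⊆ (fun x => x + h) ⁻¹' T := Set.image_subset_iff.1 (subset_toMeasurable _ _)
  calc c * μ.withDensity f (E ∩ A)
      ≤ c * μ.withDensity f ((fun x => x + h) ⁻¹' T ∩ A) := by gcongr
    _ = c * ∫⁻ x in (fun x => x + h) ⁻¹' T ∩ A, f x ∂μ := by rw [withDensity_apply _ (hP.inter hA)]
    _ ≤ ∫⁻ x in (fun x => x + h) ⁻¹' T ∩ A, c * f x ∂μ := lintegral_const_mul_le _ _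
    _ ≤ ∫⁻ x in (fun x => x + h) ⁻¹' T ∩ A, f (x + h) ∂μ :=
      setLIntegral_mono' (hP.inter hA) fun x hx => hle x hx.2
    _ ≤ ∫⁻ x in (fun x => x + h) ⁻¹' T, f (x + h) ∂μ := lintegral_mono_set Set.inter_subset_left
    _ = ∫⁻ x in T, f x ∂μ :=
      (measurePreserving_add_right μ h).setLIntegral_comp_preimage_emb
        (measurableEmbedding_addRight h) f T
    _ = μ.withDensity f ((fun x => x + h) '' E) := by
      rw [← withDensity_apply _ hT, measure_toMeasurable]

lemma mul_pi_smul_withDensity_inter_le_image_add_right {ι : Type*} [Fintype ι] [SigmaFinite μ]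
    (hf : Measurable f) {a : ℝ≥0∞} (ha : a ≠ ∞) {ν : Measure G} [SigmaFinite ν]
    (hν : ν = a • μ.withDensity f)
    {h : ι → G} {A : Set (ι → G)} (hA : MeasurableSet A)
    (hle : ∀ x ∈ A, c * ∏ i, f (x i) ≤ ∏ i, f (x i + h i)) (E : Set (ι → G)) :
    c * Measure.pi (fun _ => ν) (E ∩ A) ≤ Measure.pi (fun _ => ν) ((fun x => x + h) '' E) := by
  obtain rfl : ν = μ.withDensity (a • f) := hν.trans (withDensity_smul' a f ha).symm
  rw [pi_withDensity (fun _ => μ) fun _ => hf.const_smul a]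
  refine mul_withDensity_inter_le_image_add_right _ hA (fun x hx => ?_) E
  simp only [Pi.smul_apply, Pi.add_apply, smul_eq_mul, Finset.prod_mul_distrib]
  rw [mul_left_comm]
  gcongr
  exact hle x hx

end TranslatedDensity

section ProductChebyshev

variable {ι : Type*} [Fintype ι] {Ω : ι → Type*} [∀ i, MeasurableSpace (Ω i)]
  {μ : ∀ i, Measure (Ω i)} [∀ i, IsProbabilityMeasure (μ i)] {X : ∀ i, Ω i → ℝ}

lemma integral_pi_sum (hX : ∀ i, Integrable (X i) (μ i)) :
    ∫ ω, ∑ i, X i (ω i) ∂Measure.pi μ = ∑ i, ∫ ω, X i ω ∂μ i := by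
  rw [integral_finsetSum _ fun i _ => integrable_comp_eval (hX i)]
  exact Finset.sum_congr rfl fun i _ => integral_comp_eval (hX i).aestronglyMeasurable

lemma pi_ge_abs_sum_sub_integral_le (hX : ∀ i, MemLp (X i) 2 (μ i)) {t : ℝ} (ht : 0 < t) :
    Measure.pi μ {ω | t ≤ |∑ i, X i (ω i) - ∑ i, ∫ y, X i y ∂μ i|} ≤
      ENNReal.ofReal ((∑ i, variance (X i) (μ i)) / t ^ 2) := by
  have hLp : MemLp (∑ i, fun ω : ∀ i, Ω i => X i (ω i)) 2 (Measure.pi μ) :=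
    memLp_finsetSum' _ fun i _ => (hX i).comp_measurePreserving (measurePreserving_eval μ i)
  have hcheb := meas_ge_le_variance_div_sq hLp ht
  simp only [Finset.sum_apply] at hcheb
  rwa [variance_sum_pi hX, integral_pi_sum fun i => (hX i).integrable one_le_two] at hcheb

end ProductChebyshev

lemma abs_rpow_eq_sq_rpow_half (α y : ℝ) : |y| ^ α = (y ^ 2) ^ (α / 2) := by
  rw [← sq_abs, ← Real.rpow_natCast_mul (abs_nonneg y)]
  congr 1
  push_cast
  ring

-- In the variable `y ^ 2` the power `|y| ^ α` is concave and subadditive, and the parallelogram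
-- identity averages `(x + h) ^ 2` and `(x - h) ^ 2` to `x ^ 2 + h ^ 2`.
lemma abs_add_rpow_add_abs_sub_rpow_div_two_le {α : ℝ} (hα0 : 0 ≤ α) (hα2 : α ≤ 2) (x h : ℝ) :
    (|x + h| ^ α + |x - h| ^ α) / 2 ≤ |x| ^ α + |h| ^ α := by
  have hconcave := (Real.concaveOn_rpow (p := α / 2) (by linarith) (by linarith)).2
    (Set.mem_Ici.2 (sq_nonneg (x + h))) (Set.mem_Ici.2 (sq_nonneg (x - h)))
    (by norm_num : (0 : ℝ) ≤ 1 / 2) (by norm_num : (0 : ℝ) ≤ 1 / 2) (by norm_num)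
  have hsubadd := Real.rpow_add_le_add_rpow (p := α / 2) (sq_nonneg x) (sq_nonneg h)
    (by linarith) (by linarith)
  have hparallelogram : 1 / 2 * (x + h) ^ 2 + 1 / 2 * (x - h) ^ 2 = x ^ 2 + h ^ 2 := by ring
  simp only [smul_eq_mul, hparallelogram] at hconcave
  simp only [abs_rpow_eq_sq_rpow_half α]
  linarith

lemma abs_rpow_sub_rpow_le {β : ℝ} (hβ0 : 0 ≤ β) (hβ1 : β ≤ 1) {u w : ℝ} (hu : 0 ≤ u)
    (hw : 0 ≤ w) : |u ^ β - w ^ β| ≤ |u - w| ^ β := by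
  wlog huw : w ≤ u generalizing u w
  · rw [abs_sub_comm, abs_sub_comm u w]
    exact this hw hu (le_of_not_ge huw)
  have hsubadd := Real.rpow_add_le_add_rpow hw (sub_nonneg.2 huw) hβ0 hβ1
  rw [add_sub_cancel] at hsubadd
  rw [abs_of_nonneg (sub_nonneg.2 (Real.rpow_le_rpow hw huw hβ0)),
    abs_of_nonneg (sub_nonneg.2 huw)]
  linarith

/-- The odd part of `x ↦ |x + h| ^ α`: the fluctuating term in the cost of translating by `h`,
centred under every symmetric measure. -/
def rpowOddPart (α h x : ℝ) : ℝ := (|x + h| ^ α - |x - h| ^ α) / 2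

lemma odd_rpowOddPart (α h : ℝ) : Function.Odd (rpowOddPart α h) := fun x => by
  have hadd : |-x + h| = |x - h| := by rw [neg_add_eq_sub, abs_sub_comm]
  have hsub : |-x - h| = |x + h| := by rw [← abs_neg, neg_sub', neg_neg, sub_neg_eq_add]
  rw [rpowOddPart, rpowOddPart, hadd, hsub]
  ring

@[fun_prop]
lemma measurable_rpowOddPart (α h : ℝ) : Measurable (rpowOddPart α h) := by
  unfold rpowOddPart
  fun_prop

lemma abs_add_rpow_le {α : ℝ} (hα0 : 0 ≤ α) (hα2 : α ≤ 2) (x h : ℝ) :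
    |x + h| ^ α ≤ |x| ^ α + |h| ^ α + rpowOddPart α h x := by
  rw [rpowOddPart]
  linarith [abs_add_rpow_add_abs_sub_rpow_div_two_le hα0 hα2 x h]

lemma rpowOddPart_sq_le {α : ℝ} (hα0 : 0 ≤ α) (hα2 : α ≤ 2) (h x : ℝ) :
    rpowOddPart α h x ^ 2 ≤ 4 * |h| ^ α * |x| ^ α := by
  have hholder : |(|x + h| ^ α - |x - h| ^ α)| ≤ |4 * (x * h)| ^ (α / 2) := by
    rw [abs_rpow_eq_sq_rpow_half, abs_rpow_eq_sq_rpow_half,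
      show 4 * (x * h) = (x + h) ^ 2 - (x - h) ^ 2 by ring]
    exact abs_rpow_sub_rpow_le (by linarith) (by linarith) (sq_nonneg _) (sq_nonneg _)
  have hfour : (4 : ℝ) ^ α ≤ 16 :=
    calc (4 : ℝ) ^ α ≤ 4 ^ (2 : ℝ) := Real.rpow_le_rpow_of_exponent_le (by norm_num) hα2
      _ = 16 := by norm_num
  calc rpowOddPart α h x ^ 2
      = |(|x + h| ^ α - |x - h| ^ α)| ^ 2 / 4 := by rw [rpowOddPart, sq_abs]; ring
    _ ≤ (|4 * (x * h)| ^ (α / 2)) ^ 2 / 4 := by gcongr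
    _ = 4 ^ α * (|x| ^ α * |h| ^ α) / 4 := by
      rw [← Real.rpow_mul_natCast (abs_nonneg _), Nat.cast_ofNat, div_mul_cancel₀ _ two_ne_zero,
        abs_mul, abs_mul, Real.mul_rpow (abs_nonneg _) (by positivity),
        Real.mul_rpow (abs_nonneg _) (abs_nonneg _), Nat.abs_ofNat]
    _ ≤ 16 * (|x| ^ α * |h| ^ α) / 4 := by gcongr
    _ = 4 * |h| ^ α * |x| ^ α := by ring

lemma isNegInvariant_withDensity {G : Type*} [InvolutiveNeg G] [MeasurableSpace G]
    [MeasurableNeg G] (μ : Measure G) [μ.IsNegInvariant] {f : G → ℝ≥0∞}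
    (hf : Function.Even f) : (μ.withDensity f).IsNegInvariant := by
  refine ⟨Measure.ext fun s hs => ?_⟩
  rw [Measure.neg_apply, withDensity_apply _ hs.neg, withDensity_apply _ hs,
    ← (Measure.measurePreserving_neg μ).setLIntegral_comp_preimage_emb
      (MeasurableEquiv.neg G).measurableEmbedding f s]
  simp only [hf _]
  rfl

lemma integrable_comp_abs {F : Type*} [NormedAddCommGroup F] {f : ℝ → F}
    (hf : IntegrableOn f (Set.Ioi 0)) : Integrable fun x => f |x| := by
  have hIoi : IntegrableOn (fun x => f |x|) (Set.Ioi 0) :=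
    hf.congr_fun (fun x hx => by rw [abs_of_pos (Set.mem_Ioi.1 hx)]) measurableSet_Ioi
  have hIio : IntegrableOn (fun x => f |x|) (Set.Iio 0) := by
    simpa only [abs_neg, Set.neg_Ioi, neg_zero] using hIoi.comp_neg
  rw [← integrableOn_univ, ← Set.Iic_union_Ioi (a := (0 : ℝ))]
  exact ((integrableOn_Iic_iff_integrableOn_Iio enorm_ne_top).2 hIio).union hIoi

lemma integral_eq_zero_of_odd {G F : Type*} [AddGroup G] [MeasurableSpace G] [MeasurableNeg G]
    [NormedAddCommGroup F] [NormedSpace ℝ F] (μ : Measure G) [μ.IsNegInvariant] {f : G → F}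
    (hf : Function.Odd f) : ∫ x, f x ∂μ = 0 := by
  have : IsAddTorsionFree F := .of_isTorsionFree ℝ F
  rw [← self_eq_neg, ← integral_neg, ← integral_neg_eq_self]
  exact integral_congr_ae (Eventually.of_forall hf)

section SymmetricMeasure

variable {α : ℝ}

lemma isFiniteMeasure_nuKernel (hα0 : 0 < α) : IsFiniteMeasure (nuKernel α) := by
  have hint : Integrable fun x : ℝ => Real.exp (-|x| ^ α) := by
    simpa only [Real.rpow_zero, one_mul] using
      integrable_comp_abs (integrableOn_rpow_mul_exp_neg_rpow (s := 0) (by norm_num) hα0)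
  exact isFiniteMeasure_withDensity_ofReal hint.2

lemma nuKernel_univ_ne_zero (α : ℝ) : nuKernel α Set.univ ≠ 0 := by
  rw [nuKernel, Ne, withDensity_apply_eq_zero (by fun_prop)]
  simp [Real.exp_pos]

lemma isProbabilityMeasure_nuAlpha (hα0 : 0 < α) : IsProbabilityMeasure (nuAlpha α) := by
  have := isFiniteMeasure_nuKernel hα0
  have : NeZero (nuKernel α) := ⟨fun h => nuKernel_univ_ne_zero α (by simp [h])⟩
  exact isProbabilityMeasureSMul

instance isNegInvariant_nuAlpha (α : ℝ) : (nuAlpha α).IsNegInvariant := by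
  have := isNegInvariant_withDensity volume (f := fun x => ENNReal.ofReal (Real.exp (-|x| ^ α)))
    fun x => by simp only [abs_neg]
  refine ⟨?_⟩
  rw [nuAlpha, nuKernel, Measure.neg_def, Measure.map_smul, Measure.map_neg_eq_self]

lemma integrable_abs_rpow_nuAlpha (hα0 : 0 < α) :
    Integrable (fun x => |x| ^ α) (nuAlpha α) := by
  have hint : Integrable fun x : ℝ => |x| ^ α * Real.exp (-|x| ^ α) :=
    integrable_comp_abs (integrableOn_rpow_mul_exp_neg_rpow (by linarith) hα0)
  refine Integrable.smul_measure ?_ (ENNReal.inv_ne_top.2 (nuKernel_univ_ne_zero α))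
  rw [nuKernel, integrable_withDensity_iff (by fun_prop)
    (Eventually.of_forall fun _ => ENNReal.ofReal_lt_top)]
  simpa only [ENNReal.toReal_ofReal (Real.exp_nonneg _)] using hint

lemma memLp_rpowOddPart_nuAlpha (hα0 : 0 < α) (hα2 : α ≤ 2) (h : ℝ) :
    MemLp (rpowOddPart α h) 2 (nuAlpha α) := by
  have hmeas := measurable_rpowOddPart α h
  rw [memLp_two_iff_integrable_sq hmeas.aestronglyMeasurable]
  refine ((integrable_abs_rpow_nuAlpha hα0).const_mul (4 * |h| ^ α)).mono'
    (hmeas.pow_const 2).aestronglyMeasurable (Eventually.of_forall fun x => ?_)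
  rw [Real.norm_of_nonneg (sq_nonneg _)]
  exact rpowOddPart_sq_le hα0.le hα2 h x

lemma variance_rpowOddPart_nuAlpha_le (hα0 : 0 < α) (hα2 : α ≤ 2) (h : ℝ) :
    variance (rpowOddPart α h) (nuAlpha α) ≤ 4 * |h| ^ α * ∫ x, |x| ^ α ∂nuAlpha α := by
  rw [variance_of_integral_eq_zero (measurable_rpowOddPart α h).aemeasurable
    (integral_eq_zero_of_odd _ (odd_rpowOddPart α h)), ← integral_const_mul]
  exact integral_mono (memLp_rpowOddPart_nuAlpha hα0 hα2 h).integrable_sq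
    ((integrable_abs_rpow_nuAlpha hα0).const_mul _) fun x => rpowOddPart_sq_le hα0.le hα2 h x

variable {n : ℕ}

lemma nuPi_sum_rpowOddPart_ge_le (hα0 : 0 < α) (hα2 : α ≤ 2) (h : Fin n → ℝ) {t : ℝ}
    (ht : 0 < t) :
    nuPi α n {x | t ≤ ∑ i, rpowOddPart α (h i) (x i)} ≤
      ENNReal.ofReal (4 * lpNormPow α h * (∫ x, |x| ^ α ∂nuAlpha α) / t ^ 2) := by
  have := isProbabilityMeasure_nuAlpha hα0
  have hcheb := pi_ge_abs_sum_sub_integral_le (μ := fun _ => nuAlpha α)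
    (fun i => memLp_rpowOddPart_nuAlpha hα0 hα2 (h i)) ht
  simp only [integral_eq_zero_of_odd _ (odd_rpowOddPart α _), Finset.sum_const_zero,
    sub_zero] at hcheb
  refine (measure_mono fun x hx => ?_).trans (hcheb.trans ?_)
  · have hxt : t ≤ ∑ i, rpowOddPart α (h i) (x i) := hx
    exact hxt.trans (le_abs_self _)
  · gcongr
    rw [lpNormPow, Finset.mul_sum, Finset.sum_mul]
    exact Finset.sum_le_sum fun i _ => variance_rpowOddPart_nuAlpha_le hα0 hα2 (h i)

lemma prod_ofReal_exp_neg_abs_rpow (α : ℝ) (x : Fin n → ℝ) :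
    ∏ i, ENNReal.ofReal (Real.exp (-|x i| ^ α)) = ENNReal.ofReal (Real.exp (-lpNormPow α x)) := by
  rw [← ENNReal.ofReal_prod_of_nonneg fun i _ => Real.exp_nonneg _, ← Real.exp_sum,
    Finset.sum_neg_distrib, lpNormPow]

lemma exp_neg_mul_nuPi_inter_le_image_add_right (hα0 : 0 < α) {h : Fin n → ℝ} {K : ℝ}
    {A : Set (Fin n → ℝ)} (hA : MeasurableSet A)
    (hle : ∀ x ∈ A, lpNormPow α (x + h) ≤ lpNormPow α x + K) (E : Set (Fin n → ℝ)) :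
    ENNReal.ofReal (Real.exp (-K)) * nuPi α n (E ∩ A) ≤
      nuPi α n ((fun x => x + h) '' E) := by
  have := isProbabilityMeasure_nuAlpha hα0
  refine mul_pi_smul_withDensity_inter_le_image_add_right (ν := nuAlpha α) volume (by fun_prop)
    (ENNReal.inv_ne_top.2 (nuKernel_univ_ne_zero α)) rfl hA (fun x hx => ?_) E
  have hprod := prod_ofReal_exp_neg_abs_rpow α (x + h)
  simp only [Pi.add_apply] at hprod
  rw [hprod, prod_ofReal_exp_neg_abs_rpow, ← ENNReal.ofReal_mul (Real.exp_nonneg _),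
    ← Real.exp_add]
  gcongr
  linarith [hle x hx]

lemma lpNormPow_add_le (hα0 : 0 ≤ α) (hα2 : α ≤ 2) (x h : Fin n → ℝ) :
    lpNormPow α (x + h) ≤ lpNormPow α x + (lpNormPow α h + ∑ i, rpowOddPart α (h i) (x i)) := by
  simp only [lpNormPow, ← Finset.sum_add_distrib, ← add_assoc]
  exact Finset.sum_le_sum fun i _ => abs_add_rpow_le hα0 hα2 (x i) (h i)

lemma exp_neg_mul_nuPi_sub_le_nuPi_image_add_right (hα0 : 0 < α) (hα2 : α ≤ 2)
    (E : Set (Fin n → ℝ)) (h : Fin n → ℝ) {t : ℝ} (ht : 0 < t) :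
    ENNReal.ofReal (Real.exp (-(lpNormPow α h + t))) *
        (nuPi α n E -
          ENNReal.ofReal (4 * lpNormPow α h * (∫ x, |x| ^ α ∂nuAlpha α) / t ^ 2)) ≤
      nuPi α n ((fun x => x + h) '' E) := by
  set B := {x : Fin n → ℝ | t ≤ ∑ i, rpowOddPart α (h i) (x i)}
  have hB : MeasurableSet B := measurableSet_le (by fun_prop) (by fun_prop)
  have hcost : ∀ x ∈ Bᶜ, lpNormPow α (x + h) ≤ lpNormPow α x + (lpNormPow α h + t) := fun x hx => by
    have hxt : ∑ i, rpowOddPart α (h i) (x i) < t := not_le.1 hx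
    linarith [lpNormPow_add_le hα0.le hα2 x h]
  calc _ ≤ ENNReal.ofReal (Real.exp (-(lpNormPow α h + t))) * (nuPi α n E - nuPi α n B) := by
        gcongr
        exact nuPi_sum_rpowOddPart_ge_le hα0 hα2 h ht
    _ ≤ ENNReal.ofReal (Real.exp (-(lpNormPow α h + t))) * nuPi α n (E ∩ Bᶜ) := by
        gcongr
        exact le_measure_sdiff
    _ ≤ nuPi α n ((fun x => x + h) '' E) :=
        exp_neg_mul_nuPi_inter_le_image_add_right hα0 hB.compl hcost E

end SymmetricMeasure

section OneSidedMeasure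

variable {α : ℝ}

lemma measurable_muDensity (α : ℝ) :
    Measurable fun x : ℝ => if 0 ≤ x then ENNReal.ofReal (Real.exp (-x ^ α)) else 0 :=
  Measurable.ite measurableSet_Ici (by fun_prop) measurable_const

lemma muKernel_le_nuKernel (α : ℝ) : muKernel α ≤ nuKernel α := by
  refine withDensity_mono (Eventually.of_forall fun x => ?_)
  dsimp only
  split_ifs with hx
  · rw [abs_of_nonneg hx]
  · exact zero_le

lemma muKernel_univ_ne_zero (α : ℝ) : muKernel α Set.univ ≠ 0 := by
  have hsupport : {x : ℝ | (if 0 ≤ x then ENNReal.ofReal (Real.exp (-x ^ α)) else 0) ≠ 0} =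
      Set.Ici 0 := by
    ext x
    simp [Real.exp_pos]
  rw [muKernel, Ne, withDensity_apply_eq_zero (measurable_muDensity α), hsupport, Set.inter_univ,
    Real.volume_Ici]
  exact ENNReal.top_ne_zero

lemma isProbabilityMeasure_muAlpha (hα0 : 0 < α) : IsProbabilityMeasure (muAlpha α) := by
  have := isFiniteMeasure_nuKernel hα0
  have := isFiniteMeasure_of_le _ (muKernel_le_nuKernel α)
  have : NeZero (muKernel α) := ⟨fun h => muKernel_univ_ne_zero α (by simp [h])⟩
  exact isProbabilityMeasureSMul

lemma exp_neg_mul_muDensity_le (hα0 : 0 ≤ α) (hα1 : α ≤ 1) {h : ℝ} (hh : 0 ≤ h) (x : ℝ) :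
    ENNReal.ofReal (Real.exp (-|h| ^ α)) *
        (if 0 ≤ x then ENNReal.ofReal (Real.exp (-x ^ α)) else 0) ≤
      if 0 ≤ x + h then ENNReal.ofReal (Real.exp (-(x + h) ^ α)) else 0 := by
  by_cases hx : 0 ≤ x
  · rw [if_pos hx, if_pos (add_nonneg hx hh), ← ENNReal.ofReal_mul (Real.exp_nonneg _),
      ← Real.exp_add, abs_of_nonneg hh]
    gcongr
    linarith [Real.rpow_add_le_add_rpow hx hh hα0 hα1]
  · simp [hx]

lemma exp_neg_mul_muPi_le_muPi_image_add_right (hα0 : 0 < α) (hα1 : α ≤ 1) {n : ℕ}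
    (E : Set (Fin n → ℝ)) {h : Fin n → ℝ} (hh : ∀ i, 0 ≤ h i) :
    ENNReal.ofReal (Real.exp (-lpNormPow α h)) * muPi α n E ≤
      muPi α n ((fun x => x + h) '' E) := by
  have := isProbabilityMeasure_muAlpha hα0
  have hle (x : Fin n → ℝ) : ENNReal.ofReal (Real.exp (-lpNormPow α h)) *
        ∏ i, (if 0 ≤ x i then ENNReal.ofReal (Real.exp (-x i ^ α)) else 0) ≤
      ∏ i, if 0 ≤ x i + h i then ENNReal.ofReal (Real.exp (-(x i + h i) ^ α)) else 0 := by
    rw [← prod_ofReal_exp_neg_abs_rpow, ← Finset.prod_mul_distrib]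
    exact Finset.prod_le_prod' fun i _ => exp_neg_mul_muDensity_le hα0.le hα1 (hh i) (x i)
  simpa only [Set.inter_univ, muPi] using
    mul_pi_smul_withDensity_inter_le_image_add_right (ν := muAlpha α) volume
      (measurable_muDensity α) (ENNReal.inv_ne_top.2 (muKernel_univ_ne_zero α)) rfl
      MeasurableSet.univ (fun x _ => hle x) E

end OneSidedMeasure

lemma lpNormPow_rpow_smul {α : ℝ} (hα0 : α ≠ 0) {w : ℝ} (hw : 0 ≤ w) {n : ℕ} (h : Fin n → ℝ) :
    lpNormPow α (w ^ (1 / α) • h) = w * lpNormPow α h := by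
  simp only [lpNormPow, Finset.mul_sum, Pi.smul_apply, smul_eq_mul]
  refine Finset.sum_congr rfl fun i _ => ?_
  rw [abs_mul, abs_of_nonneg (by positivity), Real.mul_rpow (by positivity) (abs_nonneg _),
    ← Real.rpow_mul hw, one_div_mul_cancel hα0, Real.rpow_one]

section Asymptotics

variable {ι : Type*} {l : Filter ι} {v : ι → ℝ}

lemma elog_eq_log (x : ℝ≥0∞) : elog x = ENNReal.log x := rfl

lemma le_inv_mul_elog_of_exp_le {w b c : ℝ} (hw : 0 < w) (hc : 0 < c) {q : ℝ≥0∞}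
    (hq : ENNReal.ofReal (c * Real.exp (-(w * b))) ≤ q) :
    ((w⁻¹ * Real.log c - b : ℝ) : EReal) ≤ (w⁻¹ : ℝ) * elog q := by
  have hlog : Real.log (c * Real.exp (-(w * b))) = Real.log c - w * b := by
    rw [Real.log_mul hc.ne' (Real.exp_ne_zero _), Real.log_exp, sub_eq_add_neg]
  calc ((w⁻¹ * Real.log c - b : ℝ) : EReal)
      = (w⁻¹ : ℝ) * ((Real.log c - w * b : ℝ) : EReal) := by
        rw [← EReal.coe_mul, mul_sub, inv_mul_cancel_left₀ hw.ne']
    _ = (w⁻¹ : ℝ) * elog (ENNReal.ofReal (c * Real.exp (-(w * b)))) := by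
        rw [elog_eq_log, ENNReal.log_ofReal_of_pos (by positivity), hlog]
    _ ≤ (w⁻¹ : ℝ) * elog q := by
        simp only [elog_eq_log]
        exact mul_le_mul_of_nonneg_left (ENNReal.log_le_log hq)
          (EReal.coe_nonneg.2 (inv_nonneg.2 hw.le))

lemma neg_le_liminf_inv_mul_elog (hv : Tendsto v l atTop) {p : ι → ℝ≥0∞} {s : EReal}
    (hp : ∀ b : ℝ, s < b → ∃ c : ℝ, 0 < c ∧
      ∀ᶠ i in l, ENNReal.ofReal (c * Real.exp (-(v i * b))) ≤ p i) :
    -s ≤ liminf (fun i => ((v i)⁻¹ : ℝ) * elog (p i)) l := by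
  refine le_of_forall_lt fun a ha => ?_
  obtain ⟨b, hab, hbs⟩ := EReal.lt_iff_exists_real_btwn.1 ha
  obtain ⟨b', hab', hb'b⟩ := EReal.lt_iff_exists_real_btwn.1 hab
  obtain ⟨c, hc, hcp⟩ := hp (-b) (by rw [EReal.coe_neg]; exact EReal.lt_neg_comm.1 hbs)
  have hlim : Tendsto (fun i => (v i)⁻¹ * Real.log c - -b) l (𝓝 b) := by
    simpa using (hv.inv_tendsto_atTop.mul_const (Real.log c)).sub_const (-b)
  refine hab'.trans_le (le_liminf_of_le (by isBoundedDefault) ?_)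
  filter_upwards [hcp, hlim.eventually_const_lt (EReal.coe_lt_coe_iff.1 hb'b),
    hv.eventually_gt_atTop 0] with i hi hbi hvi
  exact (EReal.coe_le_coe hbi.le).trans (le_inv_mul_elog_of_exp_le hvi hc hi)

lemma exists_pos_eventually_ofReal_le {p : ι → ℝ≥0∞}
    (hp : 0 < liminf (fun i => (p i).toReal) l) :
    ∃ c : ℝ, 0 < c ∧ ∀ᶠ i in l, ENNReal.ofReal c ≤ p i := by
  obtain ⟨c, hc0, hc⟩ := exists_between hp
  refine ⟨c, hc0, ?_⟩
  filter_upwards [eventually_lt_of_lt_liminf hc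
    (isBoundedUnder_of ⟨0, fun _ => ENNReal.toReal_nonneg⟩)] with i hi
  exact ENNReal.ofReal_le_of_le_toReal hi.le

variable {α : ℝ} {d : ι → ℕ} {E : ∀ i, Set (Fin (d i) → ℝ)} {h : ∀ i, Fin (d i) → ℝ} {b c : ℝ}

lemma eventually_le_nuPi_image_add_right (hα0 : 0 < α) (hα2 : α ≤ 2) (hv : Tendsto v l atTop)
    (hc : 0 < c) (hE : ∀ᶠ i in l, ENNReal.ofReal c ≤ nuPi α (d i) (E i))
    (hh : ∀ᶠ i in l, lpNormPow α (h i) ≤ b) {ε : ℝ} (hε : 0 < ε) :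
    ∀ᶠ i in l, ENNReal.ofReal (c / 2 * Real.exp (-(v i * (b + ε)))) ≤
      nuPi α (d i) ((fun x => x + v i ^ (1 / α) • h i) '' E i) := by
  set M := ∫ x, |x| ^ α ∂nuAlpha α
  have : 0 ≤ M := integral_nonneg fun x => by positivity
  filter_upwards [hE, hh, hv.eventually_gt_atTop 0,
    hv.eventually_ge_atTop (4 * b * M / (c / 2 * ε ^ 2))] with i hEi hhi hvi hlarge
  set S := lpNormPow α (v i ^ (1 / α) • h i)
  have hS : S ≤ v i * b := by
    rw [show S = v i * lpNormPow α (h i) from lpNormPow_rpow_smul hα0.ne' hvi.le _]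
    gcongr
  have hbad : 4 * S * M / (v i * ε) ^ 2 ≤ c / 2 := by
    rw [div_le_iff₀ (by positivity)] at hlarge ⊢
    calc 4 * S * M ≤ 4 * (v i * b) * M := by gcongr
      _ = v i * (4 * b * M) := by ring
      _ ≤ v i * (v i * (c / 2 * ε ^ 2)) := by gcongr
      _ = c / 2 * (v i * ε) ^ 2 := by ring
  calc ENNReal.ofReal (c / 2 * Real.exp (-(v i * (b + ε))))
      ≤ ENNReal.ofReal (Real.exp (-(S + v i * ε)) * (c - c / 2)) := by
        rw [mul_comm, sub_half]
        gcongr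
        linarith
    _ = ENNReal.ofReal (Real.exp (-(S + v i * ε))) *
          (ENNReal.ofReal c - ENNReal.ofReal (c / 2)) := by
        rw [ENNReal.ofReal_mul (Real.exp_nonneg _), ENNReal.ofReal_sub _ (by positivity)]
    _ ≤ ENNReal.ofReal (Real.exp (-(S + v i * ε))) *
          (nuPi α (d i) (E i) - ENNReal.ofReal (4 * S * M / (v i * ε) ^ 2)) := by
        gcongr
    _ ≤ _ := exp_neg_mul_nuPi_sub_le_nuPi_image_add_right hα0 hα2 _ _ (by positivity)

lemma eventually_le_muPi_image_add_right (hα0 : 0 < α) (hα1 : α ≤ 1) (hv : Tendsto v l atTop)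
    (hE : ∀ᶠ i in l, ENNReal.ofReal c ≤ muPi α (d i) (E i))
    (hh0 : ∀ i j, 0 ≤ h i j) (hh : ∀ᶠ i in l, lpNormPow α (h i) ≤ b) :
    ∀ᶠ i in l, ENNReal.ofReal (c * Real.exp (-(v i * b))) ≤
      muPi α (d i) ((fun x => x + v i ^ (1 / α) • h i) '' E i) := by
  filter_upwards [hE, hh, hv.eventually_ge_atTop 0] with i hEi hhi hvi
  rw [mul_comm, ENNReal.ofReal_mul (Real.exp_nonneg _)]
  calc _ ≤ ENNReal.ofReal (Real.exp (-lpNormPow α (v i ^ (1 / α) • h i))) *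
        muPi α (d i) (E i) := by
        rw [lpNormPow_rpow_smul hα0.ne' hvi]
        gcongr
    _ ≤ _ := exp_neg_mul_muPi_le_muPi_image_add_right hα0 hα1 _ fun j =>
        mul_nonneg (by positivity) (hh0 i j)

end Asymptotics

theorem lower_bound_translates_general {ι : Type*} {l : Filter ι}
    {α : ℝ} (hα0 : 0 < α) {v : ι → ℝ} (hv : Tendsto v l atTop) {d : ι → ℕ}
    (E : ∀ i, Set (Fin (d i) → ℝ)) (h : ∀ i, Fin (d i) → ℝ) :
    (α ≤ 2 →
      0 < liminf (fun i => (nuPi α (d i) (E i)).toReal) l →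
      -limsup (fun i => ((lpNormPow α (h i) : ℝ) : EReal)) l ≤
        liminf (fun i => ((v i)⁻¹ : ℝ) *
          elog (nuPi α (d i) ((fun x => x + v i ^ (1 / α) • h i) '' E i))) l) ∧
    (α ≤ 1 → (∀ i j, 0 ≤ h i j) →
      0 < liminf (fun i => (muPi α (d i) (E i)).toReal) l →
      -limsup (fun i => ((lpNormPow α (h i) : ℝ) : EReal)) l ≤
        liminf (fun i => ((v i)⁻¹ : ℝ) *
          elog (muPi α (d i) ((fun x => x + v i ^ (1 / α) • h i) '' E i))) l) := by
  have hnorm {b : ℝ} (hb : limsup (fun i => ((lpNormPow α (h i) : ℝ) : EReal)) l < b) :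
      ∀ᶠ i in l, lpNormPow α (h i) ≤ b :=
    (eventually_lt_of_limsup_lt hb).mono fun i hi => (EReal.coe_lt_coe_iff.1 hi).le
  refine ⟨fun hα2 hpos => neg_le_liminf_inv_mul_elog hv fun b hb => ?_,
    fun hα1 hh0 hpos => neg_le_liminf_inv_mul_elog hv fun b hb => ?_⟩
  · obtain ⟨c, hc, hcE⟩ := exists_pos_eventually_ofReal_le hpos
    obtain ⟨b', hb', hb'b⟩ := EReal.lt_iff_exists_real_btwn.1 hb
    have hε : 0 < b - b' := sub_pos.2 (EReal.coe_lt_coe_iff.1 hb'b)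
    have hbound := eventually_le_nuPi_image_add_right hα0 hα2 hv hc hcE (hnorm hb') hε
    rw [add_sub_cancel] at hbound
    exact ⟨c / 2, half_pos hc, hbound⟩
  · obtain ⟨c, hc, hcE⟩ := exists_pos_eventually_ofReal_le hpos
    exact ⟨c, hc, eventually_le_muPi_image_add_right hα0 hα1 hv hcE hh0 (hnorm hb)⟩

/-- Proposition (lower bound on the probability of translated events). -/
theorem lower_bound_translates
    (α : ℝ) (hα0 : 0 < α)
    (v : ℕ → ℝ) (hv : Tendsto v atTop atTop)
    (E : (n : ℕ) → Set (Fin n → ℝ)) (hE : ∀ n, MeasurableSet (E n))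
    (h : (n : ℕ) → (Fin n → ℝ)) :
    -- (i) the symmetric case `ν_α`, `α ∈ (0,2]`
    (α ≤ 2 →
      0 < Filter.liminf (fun n => (nuPi α n (E n)).toReal) atTop →
      -(Filter.limsup (fun n => ((lpNormPow α (h n) : ℝ) : EReal)) atTop) ≤
        Filter.liminf
          (fun n => ((v n)⁻¹ : ℝ) *
            elog (nuPi α n ((fun x => x + (v n) ^ (1/α) • h n) '' E n)))
          atTop) ∧
    -- (ii) the one-sided case `μ_α`, `α ∈ (0,1]`, nonnegative translations
    (α ≤ 1 → (∀ n i, 0 ≤ h n i) →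
      0 < Filter.liminf (fun n => (muPi α n (E n)).toReal) atTop →
      -(Filter.limsup (fun n => ((lpNormPow α (h n) : ℝ) : EReal)) atTop) ≤
        Filter.liminf
          (fun n => ((v n)⁻¹ : ℝ) *
            elog (muPi α n ((fun x => x + (v n) ^ (1/α) • h n) '' E n)))
          atTop) := by
  exact lower_bound_translates_general hα0 hv E h

end
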